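/- Let K and L be number fields and let k, l ≥ 2 be integers. Then 𝔻_{K,k} and 𝔻_{L,l} are topologically conjugate — i.e., there exist an additive group isomorphism A : 𝓞_K → 𝓞_L and a homeomorphism f : 𝕏_{K,k} → 𝕏_{L,l} satisfying f(t + X) = A(t) + f(X) for all t ∈ 𝓞_K and X ∈ 𝕏_{K,k} — if and only if K and L are isomorphic as fields and k = l. -/

import Mathlib

open NumberField

/-- The product (Cantor) topology on the power set `𝒫(G) ≅ {0,1}^G`. -/
noncomputable instance powerSetTopology (G : Type*) : TopologicalSpace (Set G) :=
  TopologicalSpace.induced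
    (fun (S : Set G) (g : G) => @decide (g ∈ S) (Classical.propDecidable _))
    inferInstance

/-- The shift space `𝕏_{K,k}` of admissible sets: subsets of `𝓞 K` missing at least
one residue class modulo `𝔭^k` for every nonzero prime ideal `𝔭`. -/
def admissibleSets (K : Type*) [Field K] [NumberField K] (k : ℕ) : Set (Set (𝓞 K)) :=
  {X | ∀ P : Ideal (𝓞 K), P.IsPrime → P ≠ ⊥ → ∃ c : 𝓞 K, ∀ y ∈ X, y - c ∉ P ^ k}


theorem exists_theta (K : Type*) [Field K] [NumberField K] :
    ∃ θ : 𝓞 K, θ ≠ 0 ∧ Algebra.adjoin ℚ {(θ : K)} = ⊤ := by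
  obtain ⟨α, hα⟩ := Field.exists_primitive_element ℚ K
  have hα' : Algebra.adjoin ℚ {α} = ⊤ := by
    rw [← IntermediateField.adjoin_simple_toSubalgebra_of_isAlgebraic (Algebra.IsAlgebraic.isAlgebraic α), hα]
    rfl
  by_cases h0 : α = 0
  · refine ⟨1, one_ne_zero, ?_⟩
    rw [eq_top_iff, ← hα', h0]
    apply Algebra.adjoin_le
    simp
  · obtain ⟨⟨m, hm⟩, hint⟩ := IsIntegral.exists_multiple_integral_of_isLocalization (nonZeroDivisors ℤ) (Rₘ := ℚ) α (Algebra.IsIntegral.isIntegral α)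
    have hm0 : (m : K) ≠ 0 := by
      have := nonZeroDivisors.ne_zero hm
      exact_mod_cast this
    have hint' : IsIntegral ℤ ((m : K) * α) := by
      simpa [Submonoid.smul_def] using hint
    refine ⟨⟨(m : K) * α, hint'⟩, ?_, ?_⟩
    · intro h
      have := congrArg (algebraMap (𝓞 K) K) h
      simp only [map_zero] at this
      exact mul_ne_zero hm0 h0 this
    · rw [eq_top_iff, ← hα']
      apply Algebra.adjoin_le
      simp only [Set.singleton_subset_iff, SetLike.mem_coe]
      have h1 : (m : K) * α ∈ Algebra.adjoin ℚ {(m : K) * α} := Algebra.self_mem_adjoin_singleton _ _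
      have h2 := Subalgebra.smul_mem _ h1 ((m:ℚ)⁻¹)
      have : ((m:ℚ)⁻¹) • ((m : K) * α) = α := by
        rw [Algebra.smul_def]
        simp only [map_inv₀, map_intCast]
        field_simp
      rw [this] at h2
      exact h2

theorem exists_nonunit {K : Type*} [Field K] [NumberField K] (θ : 𝓞 K) (hθ : θ ≠ 0) (Q : ℕ) (hQ : 0 < Q) :
    ∃ m : ℕ, 0 < m ∧ ¬ IsUnit (1 + ((Q * m : ℕ) : 𝓞 K) * θ) := by
  have hθ' : (θ : K) ≠ 0 := by simpa using hθ
  have : ∃ m : ℕ, 0 < m ∧ ∀ w : InfinitePlace K, 3 ≤ m * w (θ : K) := by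
    have h : ∀ w : InfinitePlace K, ∀ᶠ m : ℕ in Filter.atTop, (3:ℝ) ≤ m * w (θ:K) := by
      intro w
      have hpos : 0 < w (θ : K) := InfinitePlace.pos_iff.mpr hθ'
      exact (tendsto_natCast_atTop_atTop.atTop_mul_const hpos).eventually_ge_atTop 3
    obtain ⟨m, h1, h2⟩ := ((Filter.eventually_all.mpr h).and (Filter.eventually_gt_atTop 0)).exists
    exact ⟨m, h2, h1⟩
  obtain ⟨m, hm, hw⟩ := this
  refine ⟨m, hm, fun hu => ?_⟩
  rw [isUnit_iff_norm] at hu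
  have hp := InfinitePlace.prod_eq_abs_norm ((1 + ((Q * m : ℕ) : 𝓞 K) * θ : 𝓞 K) : K)
  rw [RingOfIntegers.coe_norm] at hu
  rw [hu] at hp
  have key : ∀ w : InfinitePlace K, 2 ≤ w ((1 + ((Q * m : ℕ) : 𝓞 K) * θ : 𝓞 K) : K) := by
    intro w
    have e : ((1 + ((Q * m : ℕ) : 𝓞 K) * θ : 𝓞 K) : K) = ((Q * m : ℕ) : K) * θ - (-1) := by
      push_cast; simp; ring
    have h1 : w (((Q * m : ℕ) : K) * θ) - w (-1) ≤ w (((Q * m : ℕ) : K) * θ - (-1)) :=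
      AbsoluteValue.le_sub w.1 _ _
    have h2 : w (((Q * m : ℕ) : K) * θ) = (Q * m : ℕ) * w (θ : K) := by
      rw [map_mul, ← w.norm_embedding_eq ((Q * m : ℕ) : K)]
      simp
    have h3 : w (-1 : K) = 1 := by
      have := AbsoluteValue.map_neg w.1 (1:K)
      rw [AbsoluteValue.map_one] at this
      exact this
    rw [e]
    have hQ1 : (1:ℝ) ≤ Q := by exact_mod_cast hQ
    have := hw w
    have : (3:ℝ) ≤ Q * (m * w (θ:K)) := by nlinarith
    rw [h2, h3] at h1
    push_cast at h1 ⊢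
    nlinarith
  have : (1:ℝ) < ∏ w : InfinitePlace K, w ((1 + ((Q * m : ℕ) : 𝓞 K) * θ : 𝓞 K) : K) ^ w.mult := by
    obtain ⟨w0⟩ := (inferInstance : Nonempty (InfinitePlace K))
    have h1 : ∀ w : InfinitePlace K, 2 ≤ w ((1 + ((Q * m : ℕ) : 𝓞 K) * θ : 𝓞 K) : K) ^ w.mult := by
      intro w
      calc (2:ℝ) ≤ _ := key w
        _ ≤ _ := le_self_pow₀ (by linarith [key w]) InfinitePlace.mult_pos.ne'
    calc (1:ℝ) = ∏ w : InfinitePlace K, 1 := by simp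
      _ < _ := Finset.prod_lt_prod (by simp) (fun w _ => by linarith [h1 w]) ⟨w0, by simp, by linarith [h1 w0]⟩
  rw [hp] at this
  simp at this

theorem not_mem_of_coprime {R : Type*} [CommRing R] {P : Ideal R} (hP : P ≠ ⊤) {a b : ℕ}
    (h : Nat.Coprime a b) (ha : (a : R) ∈ P) (hb : (b : R) ∈ P) : False := by
  apply hP
  rw [Ideal.eq_top_iff_one]
  have := Nat.isCoprime_iff_coprime.mpr h
  obtain ⟨u, v, huv⟩ := this
  have : (1 : R) = u * a + v * b := by exact_mod_cast (congrArg (Int.cast : ℤ → R) huv).symm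
  rw [this]
  exact P.add_mem (P.mul_mem_left _ ha) (P.mul_mem_left _ hb)

theorem exists_prime_mem {K : Type*} [Field K] [NumberField K] {P : Ideal (𝓞 K)} (hP : P.IsPrime) (h0 : P ≠ ⊥) :
    ∃ p : ℕ, p.Prime ∧ (p : 𝓞 K) ∈ P := by
  have h1 : ((Ideal.absNorm P : ℕ) : 𝓞 K) ∈ P := Ideal.absNorm_mem P
  have hn : Ideal.absNorm P ≠ 0 := by rwa [Ne, Ideal.absNorm_eq_zero_iff]
  rw [← Nat.prod_primeFactorsList hn, Nat.cast_list_prod, ← Multiset.prod_coe, ] at h1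
  obtain ⟨x, hx, hx'⟩ := (hP.multiset_prod_mem_iff_exists_mem _).1 h1
  rw [Multiset.mem_coe] at hx
  obtain ⟨p, hp, rfl⟩ := List.mem_map.1 hx
  exact ⟨p, Nat.prime_of_mem_primeFactorsList hp, hx'⟩

theorem exists_M {K : Type*} [Field K] [NumberField K] (θ : 𝓞 K)
    (hadj : Algebra.adjoin ℚ {(θ : K)} = ⊤) :
    ∃ M : ℕ, M ≠ 0 ∧ (M : 𝓞 K) ∈ conductor ℤ θ ∧ (M : 𝓞 K) ∈ differentIdeal ℤ (𝓞 K) := by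
  have hcd := conductor_mul_differentIdeal ℤ ℚ K θ hadj
  have hδ : Polynomial.aeval θ (Polynomial.derivative (minpoly ℤ θ)) ≠ 0 := by
    intro h
    have h1 : (Polynomial.aeval (θ:K) (Polynomial.derivative (minpoly ℚ (θ:K)))) ≠ 0 :=
      Polynomial.Separable.aeval_derivative_ne_zero (Algebra.IsSeparable.isSeparable ℚ (θ:K)) (minpoly.aeval _ _)
    apply h1
    have h2 : minpoly ℚ (θ:K) = (minpoly ℤ θ).map (algebraMap ℤ ℚ) :=
      minpoly.isIntegrallyClosed_eq_field_fractions ℚ K (RingOfIntegers.isIntegral θ)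
    rw [h2, Polynomial.derivative_map, Polynomial.aeval_map_algebraMap, Polynomial.aeval_algebraMap_apply, h, map_zero]
  generalize Polynomial.aeval θ (Polynomial.derivative (minpoly ℤ θ)) = δ at hcd hδ
  obtain ⟨M, hM0, hMmem⟩ : ∃ M : ℕ, M ≠ 0 ∧ (M : 𝓞 K) ∈ Ideal.span {δ} :=
    ⟨Ideal.absNorm (Ideal.span {δ}), by rw [Ne, Ideal.absNorm_eq_zero_iff]; simpa using hδ,
      Ideal.absNorm_mem _⟩
  have h1 : Ideal.span {δ} ≤ conductor ℤ θ := by rw [← hcd]; exact Ideal.mul_le_left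
  have h2 : Ideal.span {δ} ≤ differentIdeal ℤ (𝓞 K) := by rw [← hcd]; exact Ideal.mul_le_right
  exact ⟨M, hM0, h1 hMmem, h2 hMmem⟩

theorem surj_of {R : Type*} [CommRing R] (P : Ideal R) (p : ℕ) (hpP : (p : R) ∈ P)
    (Q M : ℕ) (hQ : Nat.Coprime p Q) (hM : Nat.Coprime p M) (θ : R) (hβ : 1 + (Q : R) * θ ∈ P)
    (hMc : (M : R) ∈ conductor ℤ θ) : ∀ x : R, ∃ m : ℤ, x - m ∈ P := by
  have hinv : ∀ (a : ℕ), Nat.Coprime p a → ∀ x : R, (∃ m : ℤ, (a : R) * x - m ∈ P) →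
      ∃ m : ℤ, x - m ∈ P := by
    intro a ha x hx
    obtain ⟨u, v, huv⟩ := Nat.isCoprime_iff_coprime.mpr ha
    have h1 : (1 : R) = u * p + v * a := by exact_mod_cast (congrArg (Int.cast : ℤ → R) huv).symm
    obtain ⟨n, hn⟩ := hx
    refine ⟨v * n, ?_⟩
    have : x - ((v * n : ℤ) : R) = (u * x) * p + v * (a * x - n) := by
      push_cast
      linear_combination x * h1
    rw [this]
    exact P.add_mem (P.mul_mem_left _ hpP) (P.mul_mem_left _ hn)
  have hθ : ∃ m : ℤ, θ - m ∈ P := by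
    refine hinv Q hQ θ ⟨-1, ?_⟩
    convert hβ using 1
    push_cast
    ring
  intro x
  refine hinv M hM x ?_
  have hx := mem_conductor_iff.1 hMc x
  generalize (M : R) * x = y at hx
  induction hx using Algebra.adjoin_induction with
  | mem x hx => rw [Set.mem_singleton_iff] at hx; rw [hx]; exact hθ
  | algebraMap r => exact ⟨r, by simp⟩
  | add x y _ _ hx hy =>
    obtain ⟨a, ha⟩ := hx
    obtain ⟨b, hb⟩ := hy
    refine ⟨a + b, ?_⟩
    convert P.add_mem ha hb using 1
    push_cast; ring
  | mul x y _ _ hx hy =>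
    obtain ⟨a, ha⟩ := hx
    obtain ⟨b, hb⟩ := hy
    refine ⟨a * b, ?_⟩
    convert P.add_mem (P.mul_mem_left y ha) (P.mul_mem_left (a : R) hb) using 1
    push_cast; ring

theorem not_mem_sq {K : Type*} [Field K] [NumberField K] (P : Ideal (𝓞 K)) (hP : P ≠ ⊤) (p M : ℕ) (hp : p.Prime)
    (hpP : (p : 𝓞 K) ∈ P)
    (hM : Nat.Coprime p M) (hMd : (M : 𝓞 K) ∈ differentIdeal ℤ (𝓞 K)) : (p : 𝓞 K) ∉ P ^ 2 := by
  intro hp2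
  have := Fact.mk hp
  have : (Ideal.span {(p:ℤ)}).IsMaximal := Int.ideal_span_isMaximal_of_prime p
  have h0 : P ^ 2 ∣ Ideal.map (algebraMap ℤ (𝓞 K)) (Ideal.span {(p:ℤ)}) := by
    rw [Ideal.dvd_iff_le, Ideal.map_span, Ideal.span_le]
    simpa using hp2
  have h := pow_sub_one_dvd_differentIdeal ℤ (p := Ideal.span {(p:ℤ)}) P 2 (by simpa using hp.ne_zero) h0
  rw [Ideal.dvd_iff_le] at h
  have h3 := h hMd
  simp only [Nat.add_one_sub_one, pow_one] at h3
  exact not_mem_of_coprime hP hM hpP h3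

theorem exists_deg_one (K : Type*) [Field K] [NumberField K] (B : ℕ) :
    ∃ (p : ℕ) (P : Ideal (𝓞 K)), p.Prime ∧ B < p ∧ P.IsPrime ∧ P ≠ ⊥ ∧ (p : 𝓞 K) ∈ P ∧
      (p : 𝓞 K) ∉ P ^ 2 ∧ ∀ x : 𝓞 K, ∃ m : ℤ, x - m ∈ P := by
  obtain ⟨θ, hθ, hadj⟩ := exists_theta K
  obtain ⟨M, hM0, hMc, hMd⟩ := exists_M θ hadj
  have hpos : 0 < B.factorial * M := Nat.mul_pos (Nat.factorial_pos _) (Nat.pos_of_ne_zero hM0)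
  obtain ⟨m, hm, hnu⟩ := exists_nonunit θ hθ (B.factorial * M) hpos
  obtain ⟨P, hPmax, hβ⟩ := exists_max_ideal_of_mem_nonunits hnu
  have hPp := hPmax.isPrime
  have hP0 : P ≠ ⊥ := Ring.ne_bot_of_isMaximal_of_not_isField hPmax (RingOfIntegers.not_isField K)
  obtain ⟨p, hp, hpP⟩ := exists_prime_mem hPp hP0
  have hQ : ¬ p ∣ B.factorial * M * m := by
    rintro ⟨c, hc⟩
    rw [hc] at hβ
    apply hPp.ne_top
    rw [Ideal.eq_top_iff_one]
    have h2 : ((p * c : ℕ) : 𝓞 K) * θ ∈ P := by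
      rw [Nat.cast_mul]
      exact P.mul_mem_right _ (P.mul_mem_right _ hpP)
    exact (Ideal.add_mem_iff_left P h2).1 hβ
  have hpM : ¬ p ∣ M := fun h => hQ (by rw [mul_right_comm]; exact Dvd.dvd.mul_left h _)
  have hcopM : Nat.Coprime p M := (Nat.Prime.coprime_iff_not_dvd hp).2 hpM
  refine ⟨p, P, hp, ?_, hPp, hP0, hpP, ?_, ?_⟩
  · by_contra hle
    exact hQ (Dvd.dvd.mul_right (Dvd.dvd.mul_right ((Nat.Prime.dvd_factorial hp).2 (not_lt.1 hle)) _) _)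
  · exact not_mem_sq P hPp.ne_top p M hp hpP hcopM hMd
  · exact surj_of P p hpP _ M ((Nat.Prime.coprime_iff_not_dvd hp).2 hQ) hcopM θ hβ hMc
theorem p_pow_not_mem {R : Type*} [CommRing R] [IsDedekindDomain R] {P : Ideal R} (hP : P.IsPrime)
    (h0 : P ≠ ⊥) {a : R} (ha : a ∈ P) (ha2 : a ∉ P ^ 2) (j : ℕ) : a ^ j ∉ P ^ (j + 1) := by
  have hPr : Prime P := Ideal.prime_of_isPrime h0 hP
  obtain ⟨J, hJ⟩ : P ∣ Ideal.span {a} := by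
    rw [Ideal.dvd_iff_le, Ideal.span_le]; simpa using ha
  intro h
  have h1 : P ^ (j + 1) ∣ Ideal.span {a} ^ j := by
    rw [Ideal.dvd_iff_le, Ideal.span_singleton_pow, Ideal.span_le]; simpa using h
  rw [hJ, mul_pow, pow_succ] at h1
  have h2 : P ∣ J ^ j := (mul_dvd_mul_iff_left (pow_ne_zero _ hPr.ne_zero)).1 h1
  have h3 : P ∣ J := hPr.dvd_of_dvd_pow h2
  apply ha2
  have h4 : P ^ 2 ∣ Ideal.span {a} := by rw [hJ, sq]; exact mul_dvd_mul_left _ h3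
  rw [Ideal.dvd_iff_le] at h4
  exact h4 (Ideal.mem_span_singleton_self a)

theorem surj_pow {R : Type*} [CommRing R] [IsDedekindDomain R] {P : Ideal R} (hP : P.IsPrime)
    (h0 : P ≠ ⊥) {p : ℕ} (ha : (p : R) ∈ P) (ha2 : (p : R) ∉ P ^ 2)
    (hs : ∀ x : R, ∃ m : ℤ, x - m ∈ P) (k : ℕ) : ∀ x : R, ∃ m : ℤ, x - m ∈ P ^ k := by
  induction k with
  | zero => intro x; exact ⟨0, by simp⟩
  | succ k ih =>
    intro x
    obtain ⟨m, hm⟩ := ih x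
    obtain ⟨d, e, he, hde⟩ := Ideal.exists_mul_add_mem_pow_succ h0 ((p : R) ^ k) (x - m)
      (Ideal.pow_mem_pow ha k) (p_pow_not_mem hP h0 ha ha2 k) hm
    obtain ⟨m', hm'⟩ := hs d
    refine ⟨m + p ^ k * m', ?_⟩
    have : x - ((m + p ^ k * m' : ℤ) : R) = (p : R) ^ k * (d - m') + e := by
      push_cast
      linear_combination -hde
    rw [this]
    refine Ideal.add_mem _ ?_ he
    rw [pow_succ]
    exact Ideal.mul_mem_mul (Ideal.pow_mem_pow ha k) hm'

theorem isOpen_mem {G : Type*} (g : G) : IsOpen {S : Set G | g ∈ S} := by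
  rw [isOpen_induced_iff]
  refine ⟨{φ : G → Bool | φ g = true}, ?_, ?_⟩
  · have h : Continuous (fun φ : G → Bool => φ g) := continuous_apply g
    exact h.isOpen_preimage _ (isOpen_discrete ({true} : Set Bool))
  · ext S; simp

theorem exists_window {G : Type*} {U : Set (Set G)} (hU : IsOpen U) {X : Set G} (hX : X ∈ U) :
    ∃ W : Finset G, ∀ Y : Set G, (∀ w ∈ W, (w ∈ Y ↔ w ∈ X)) → Y ∈ U := by
  rw [isOpen_induced_iff] at hU
  obtain ⟨V, hV, rfl⟩ := hU
  rw [isOpen_pi_iff] at hV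
  obtain ⟨W, u, hu, hsub⟩ := hV _ hX
  refine ⟨W, fun Y hY => hsub ?_⟩
  intro w hw
  have := (hu w hw).2
  have e : (@decide (w ∈ Y) (Classical.propDecidable _)) = @decide (w ∈ X) (Classical.propDecidable _) := by
    simp [hY w hw]
  simp only
  rw [e]
  exact this

theorem adm_translate {K : Type*} [Field K] [NumberField K] {k : ℕ} {X : Set (𝓞 K)}
    (hX : X ∈ admissibleSets K k) (t : 𝓞 K) : (t + ·) '' X ∈ admissibleSets K k := by
  intro P hP h0
  obtain ⟨c, hc⟩ := hX P hP h0
  refine ⟨t + c, ?_⟩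
  rintro _ ⟨y, hy, rfl⟩
  simpa using hc y hy

theorem adm_mono {K : Type*} [Field K] [NumberField K] {k : ℕ} {X Y : Set (𝓞 K)}
    (hX : X ∈ admissibleSets K k) (h : Y ⊆ X) : Y ∈ admissibleSets K k := by
  intro P hP h0
  obtain ⟨c, hc⟩ := hX P hP h0
  exact ⟨c, fun y hy => hc y (h hy)⟩

theorem adm_zero {K : Type*} [Field K] [NumberField K] {k : ℕ} (hk : k ≠ 0) :
    ({0} : Set (𝓞 K)) ∈ admissibleSets K k := by
  intro P hP h0
  refine ⟨-1, ?_⟩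
  rintro y rfl h
  apply hP.ne_top
  rw [Ideal.eq_top_iff_one]
  simpa using Ideal.pow_le_self hk h

theorem transfer {K L : Type*} [Field K] [NumberField K]
    [Field L] [NumberField L] (k l : ℕ) (hk : k ≠ 0)
    (A : 𝓞 K ≃+ 𝓞 L) (f : ↥(admissibleSets K k) ≃ₜ ↥(admissibleSets L l))
    (h : ∀ (t : 𝓞 K) (X Y : ↥(admissibleSets K k)),
        (Y : Set (𝓞 K)) = (t + ·) '' (X : Set (𝓞 K)) →
        ((f Y : Set (𝓞 L))) = (A t + ·) '' ((f X : Set (𝓞 L)))) :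
    ∃ W : Finset (𝓞 K), ∀ T ∈ admissibleSets K k,
      (∀ s ∈ T, ∀ t ∈ T, s ≠ t → s - t ∉ W) → A '' T ∈ admissibleSets L l := by
  let Z : ↥(admissibleSets K k) := ⟨{0}, adm_zero hk⟩
  have hne : ((f Z : Set (𝓞 L))).Nonempty := by
    rw [Set.nonempty_iff_ne_empty]
    intro he
    let Z1 : ↥(admissibleSets K k) := ⟨(1 + ·) '' {0}, adm_translate (adm_zero hk) 1⟩
    have h1 := h 1 Z Z1 rfl
    rw [he, Set.image_empty, ← he] at h1
    have h2 := f.injective (Subtype.ext h1)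
    have h3 : ((1 + ·) '' {0} : Set (𝓞 K)) = {0} := congrArg Subtype.val h2
    simp at h3
  obtain ⟨f0, hf0⟩ := hne
  have hop : IsOpen (f ⁻¹' (Subtype.val ⁻¹' {S : Set (𝓞 L) | f0 ∈ S})) :=
    ((isOpen_mem f0).preimage continuous_subtype_val).preimage f.continuous
  obtain ⟨U, hU, hUe⟩ := isOpen_induced_iff.1 hop
  have hZU : ({0} : Set (𝓞 K)) ∈ U := by
    have : Z ∈ Subtype.val ⁻¹' U := by rw [hUe]; exact hf0
    exact this
  obtain ⟨W, hW⟩ := exists_window hU hZU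
  refine ⟨W, fun T hT hsp => ?_⟩
  let X : ↥(admissibleSets K k) := ⟨T, hT⟩
  have key : ∀ t ∈ T, A t + f0 ∈ (f X : Set (𝓞 L)) := by
    intro t ht
    let Y : ↥(admissibleSets K k) := ⟨(-t + ·) '' T, adm_translate hT (-t)⟩
    have hXY : (X : Set (𝓞 K)) = (t + ·) '' (Y : Set (𝓞 K)) := by
      simp only [X, Y, Set.image_image]
      simp
    rw [h t Y X hXY]
    refine ⟨f0, ?_, rfl⟩
    have hYU : (Y : Set (𝓞 K)) ∈ U := by
      apply hW
      intro w hw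
      simp only [Y, Set.mem_image, Set.mem_singleton_iff]
      constructor
      · rintro ⟨s, hs, rfl⟩
        by_contra hne
        have hst : s ≠ t := fun e => hne (by rw [e]; simp)
        apply hsp s hs t ht hst
        rwa [sub_eq_neg_add]
      · rintro rfl
        exact ⟨t, ht, by simp⟩
    have : Y ∈ Subtype.val ⁻¹' U := hYU
    rw [hUe] at this
    exact this
  refine adm_mono (adm_translate (f X).2 (-f0)) ?_
  rintro _ ⟨t, ht, rfl⟩
  exact ⟨_, key t ht, by simp⟩

theorem conj_symm {K L : Type*} [Field K] [NumberField K]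
    [Field L] [NumberField L] (k l : ℕ)
    (A : 𝓞 K ≃+ 𝓞 L) (f : ↥(admissibleSets K k) ≃ₜ ↥(admissibleSets L l))
    (h : ∀ (t : 𝓞 K) (X Y : ↥(admissibleSets K k)),
        (Y : Set (𝓞 K)) = (t + ·) '' (X : Set (𝓞 K)) →
        ((f Y : Set (𝓞 L))) = (A t + ·) '' ((f X : Set (𝓞 L)))) :
    ∀ (t : 𝓞 L) (X Y : ↥(admissibleSets L l)),
        (Y : Set (𝓞 L)) = (t + ·) '' (X : Set (𝓞 L)) →
        ((f.symm Y : Set (𝓞 K))) = (A.symm t + ·) '' ((f.symm X : Set (𝓞 K))) := by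
  intro t X Y hXY
  let Z : ↥(admissibleSets K k) := ⟨(A.symm t + ·) '' (f.symm X : Set (𝓞 K)), adm_translate (f.symm X).2 _⟩
  have h1 := h (A.symm t) (f.symm X) Z rfl
  rw [f.apply_symm_apply, A.apply_symm_apply, ← hXY] at h1
  have : Z = f.symm Y := by
    rw [← f.symm_apply_apply Z]
    congr 1
    exact Subtype.ext h1
  rw [← this]

theorem exists_sparse {G ι : Type*} [AddCommGroup G] (W : Finset G) (s : Finset ι) (Y : ι → Set G)
    (hY : ∀ i, (Y i).Infinite) :
    ∃ t : ι → G, (∀ i, t i ∈ Y i) ∧ ∀ i ∈ s, ∀ j ∈ s, i ≠ j → t i - t j ∉ W := by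
  classical
  induction s using Finset.induction_on with
  | empty =>
    choose t ht using fun i => (hY i).nonempty
    exact ⟨t, ht, by simp⟩
  | insert a s ha ih =>
    obtain ⟨t, ht, hs⟩ := ih
    let bad : Finset G := (s ×ˢ W).image (fun x => t x.1 + x.2) ∪ (s ×ˢ W).image (fun x => t x.1 - x.2)
    obtain ⟨y, hy, hyb⟩ := (hY a).exists_notMem_finset bad
    simp only [bad, Finset.mem_union, Finset.mem_image, Finset.mem_product, not_or, not_exists, not_and, Prod.forall] at hyb
    have hne : ∀ j ∈ s, j ≠ a := fun j hj e => ha (e ▸ hj)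
    refine ⟨Function.update t a y, ?_, ?_⟩
    · intro i
      by_cases hi : i = a
      · subst hi; simpa using hy
      · simpa [hi] using ht i
    · intro i hi j hj hij
      rw [Finset.mem_insert] at hi hj
      rcases hi with rfl | hi <;> rcases hj with rfl | hj
      · exact absurd rfl hij
      · rw [Function.update_self, Function.update_of_ne (hne j hj)]
        intro hw
        exact hyb.1 j _ ⟨hj, hw⟩ (by abel)
      · rw [Function.update_self, Function.update_of_ne (hne i hi)]
        intro hw
        exact hyb.2 i _ ⟨hi, hw⟩ (by abel)
      · rw [Function.update_of_ne (hne i hi), Function.update_of_ne (hne j hj)]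
        exact hs i hi j hj hij

open scoped Pointwise in
theorem exists_avoid {G ι : Type*} [AddCommGroup G] (s : Finset ι) (P : AddSubgroup G)
    (H : ι → AddSubgroup G) (p : ℕ) (hp : p.Prime) (hs : s.card < p) (N : ℕ)
    (hN : ∀ i ∈ s, ∀ x ∈ P, p ^ N • x ∈ H i) (hne : ∀ i ∈ s, ∃ x ∈ P, x ∉ H i) (c : G) :
    ∃ x ∈ P, ∀ i ∈ s, c + x ∉ H i := by
  classical
  by_contra! hcon
  let g : ι → P := fun i => if h : ∃ g : P, c + (g : G) ∈ H i then h.choose else 0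
  have hcov : ⋃ i ∈ s, g i +ᵥ (((H i).addSubgroupOf P : AddSubgroup P) : Set P) = Set.univ := by
    rw [Set.eq_univ_iff_forall]
    intro x
    obtain ⟨i, hi, hx⟩ := hcon x x.2
    rw [Set.mem_iUnion₂]
    refine ⟨i, hi, ?_⟩
    have hex : ∃ g : P, c + (g : G) ∈ H i := ⟨x, hx⟩
    have hg : c + (g i : G) ∈ H i := by
      simp only [g, dif_pos hex]
      exact hex.choose_spec
    rw [Set.mem_vadd_set_iff_neg_vadd_mem]
    simp only [vadd_eq_add, SetLike.mem_coe, AddSubgroup.mem_addSubgroupOf, AddSubgroup.coe_add,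
      AddSubgroup.coe_neg]
    have := (H i).sub_mem hx hg
    convert this using 1
    abel
  obtain ⟨i, hi, hfin, hle⟩ := AddSubgroup.exists_index_le_card_of_leftCoset_cover hcov
  obtain ⟨x, hxP, hx⟩ := hne i hi
  apply hx
  have h1 := ((H i).addSubgroupOf P).nsmul_index_mem ⟨x, hxP⟩
  rw [AddSubgroup.mem_addSubgroupOf] at h1
  generalize hn : ((H i).addSubgroupOf P).index = n at *
  have hn0 : n ≠ 0 := by rw [← hn]; exact hfin.index_ne_zero
  have hcop : Nat.Coprime n (p ^ N) := by
    apply Nat.Coprime.pow_right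
    rw [Nat.coprime_comm, Nat.Prime.coprime_iff_not_dvd hp]
    intro hd
    have := Nat.le_of_dvd (Nat.pos_of_ne_zero hn0) hd
    omega
  obtain ⟨u, v, huv⟩ := Nat.isCoprime_iff_coprime.mpr hcop
  have h2 := hN i hi x hxP
  have h3 : x = u • (n • x) + v • (p ^ N • x) := by
    rw [← natCast_zsmul x n, ← natCast_zsmul x (p ^ N), smul_smul, smul_smul, ← add_smul, huv, one_smul]
  rw [h3]
  exact (H i).add_mem ((H i).zsmul_mem h1 u) ((H i).zsmul_mem h2 v)

theorem card_over_le {L : Type*} [Field L] [NumberField L] (p : ℕ) (hp : p.Prime) (S : Finset (Ideal (𝓞 L)))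
    (hS : ∀ Q ∈ S, Q.IsPrime ∧ Q ≠ ⊥ ∧ (p : 𝓞 L) ∈ Q) : S.card ≤ Module.finrank ℚ L := by
  have := Fact.mk hp
  have : (Ideal.span {(p:ℤ)}).IsMaximal := Int.ideal_span_isMaximal_of_prime p
  have h0 : (Ideal.span {(p:ℤ)}) ≠ ⊥ := by simpa using hp.ne_zero
  refine le_trans (Finset.card_le_card ?_) (Ideal.card_primesOverFinset_le_finrank (𝓞 L) ℚ L h0)
  intro Q hQ
  obtain ⟨h1, h2, h3⟩ := hS Q hQ
  rw [IsDedekindDomain.mem_primesOverFinset_iff h0]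
  refine ⟨h1, ⟨?_⟩⟩
  refine this.eq_of_le (Ideal.IsPrime.under ℤ Q).ne_top ?_
  rw [Ideal.span_le]
  simpa [Ideal.under] using h3

theorem exists_coprime_mem {L : Type*} [Field L] [NumberField L] (p : ℕ) (hp : p.Prime)
    (l : ℕ) (S : Finset (Ideal (𝓞 L)))
    (hS : ∀ Q ∈ S, Q.IsPrime ∧ Q ≠ ⊥ ∧ (p : 𝓞 L) ∉ Q) :
    ∃ M : ℕ, Nat.Coprime p M ∧ ∀ Q ∈ S, (M : 𝓞 L) ∈ Q ^ l := by
  classical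
  induction S using Finset.induction_on with
  | empty => exact ⟨1, by simp, by simp⟩
  | insert Q S hQS ih =>
    obtain ⟨M, hM, hMS⟩ := ih (fun Q hQ => hS Q (Finset.mem_insert_of_mem hQ))
    obtain ⟨h1, h2, h3⟩ := hS Q (Finset.mem_insert_self _ _)
    obtain ⟨q, hq, hqQ⟩ := exists_prime_mem h1 h2
    refine ⟨M * q ^ l, ?_, ?_⟩
    · refine Nat.Coprime.mul_right hM (Nat.Coprime.pow_right _ ?_)
      rw [Nat.coprime_primes hp hq]
      rintro rfl
      exact h3 hqQ
    · intro Q' hQ'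
      push_cast
      rcases Finset.mem_insert.1 hQ' with rfl | h
      · exact Ideal.mul_mem_left _ _ (Ideal.pow_mem_pow hqQ l)
      · exact Ideal.mul_mem_right _ _ (hMS Q' h)

theorem exists_missed {L : Type*} [Field L] [NumberField L] {ι : Type*} [Fintype ι] (t : ι → 𝓞 L)
    (I : Ideal (𝓞 L)) (hI : Fintype.card ι < Ideal.absNorm I) : ∃ c, ∀ i, t i - c ∉ I := by
  by_contra! h
  have hsur : Function.Surjective (fun i => Ideal.Quotient.mk I (t i)) := by
    intro y
    obtain ⟨c, rfl⟩ := Ideal.Quotient.mk_surjective y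
    obtain ⟨i, hi⟩ := h c
    exact ⟨i, (Ideal.Quotient.eq).2 hi⟩
  have h1 := Nat.card_le_card_of_surjective _ hsur
  rw [Nat.card_eq_fintype_card (α := ι)] at h1
  rw [Ideal.absNorm_apply, Submodule.cardQuot_apply] at hI
  exact absurd hI (not_lt.2 h1)

theorem main_subset {K L : Type*} [Field K] [NumberField K]
    [Field L] [NumberField L] (k l : ℕ) (hl : l ≠ 0)
    (A : 𝓞 K ≃+ 𝓞 L) (W : Finset (𝓞 L))
    (hW : ∀ T ∈ admissibleSets L l,
      (∀ s ∈ T, ∀ t ∈ T, s ≠ t → s - t ∉ W) → A.symm '' T ∈ admissibleSets K k)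
    (P : Ideal (𝓞 K)) (hP : P.IsPrime) (h0 : P ≠ ⊥) (p : ℕ) (hp : p.Prime) (hpP : (p : 𝓞 K) ∈ P)
    (hpn : Module.finrank ℚ L < p) :
    ∃ Q : Ideal (𝓞 L), Q.IsPrime ∧ Q ≠ ⊥ ∧ ∀ x ∈ P ^ k, A x ∈ Q ^ l := by
  classical
  by_contra! hcon
  have hPk : P ^ k ≠ ⊥ := pow_ne_zero _ h0
  have : Finite (𝓞 K ⧸ P ^ k) := Ideal.finiteQuotientOfFreeOfNeBot _ hPk
  have : Fintype (𝓞 K ⧸ P ^ k) := Fintype.ofFinite _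
  obtain ⟨m, hm⟩ : ∃ m, m = Fintype.card (𝓞 K ⧸ P ^ k) := ⟨_, rfl⟩
  let S : Finset (Ideal (𝓞 L)) :=
    (Ideal.finite_setOfPred_absNorm_le (S := 𝓞 L) m).toFinset.filter (fun Q => Q.IsPrime ∧ Q ≠ ⊥)
  have hS : ∀ Q, Q ∈ S ↔ Ideal.absNorm Q ≤ m ∧ Q.IsPrime ∧ Q ≠ ⊥ := by
    intro Q; simp [S]
  let S1 := S.filter (fun Q => (p : 𝓞 L) ∈ Q)
  let S2 := S.filter (fun Q => (p : 𝓞 L) ∉ Q)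
  have hS1 : S1.card < p := by
    refine lt_of_le_of_lt (card_over_le p hp S1 ?_) hpn
    intro Q hQ
    obtain ⟨h1, h2⟩ := Finset.mem_filter.1 hQ
    exact ⟨((hS Q).1 h1).2.1, ((hS Q).1 h1).2.2, h2⟩
  obtain ⟨M, hpM, hM⟩ := exists_coprime_mem p hp l S2 (by
    intro Q hQ
    obtain ⟨h1, h2⟩ := Finset.mem_filter.1 hQ
    exact ⟨((hS Q).1 h1).2.1, ((hS Q).1 h1).2.2, h2⟩)
  have hM0 : M ≠ 0 := by
    rintro rfl
    rw [Nat.coprime_zero_right] at hpM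
    exact hp.one_lt.ne' hpM
  -- avoidance
  have hav : ∀ c : 𝓞 K, ∃ x ∈ P ^ k, ∀ Q ∈ S1, A (c + x) ∉ Q ^ l := by
    intro c
    obtain ⟨x, hx, h⟩ := exists_avoid S1 (P ^ k).toAddSubgroup
      (fun Q => (Q ^ l).toAddSubgroup.comap A.toAddMonoidHom) p hp hS1 l
      (by
        intro Q hQ x hx
        obtain ⟨h1, h2⟩ := Finset.mem_filter.1 hQ
        simp only [AddSubgroup.mem_comap, Submodule.mem_toAddSubgroup]
        have : A.toAddMonoidHom (p ^ l • x) = (p : 𝓞 L) ^ l * A x := by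
          change A (p ^ l • x) = _
          rw [map_nsmul, nsmul_eq_mul, Nat.cast_pow]
        rw [this]
        exact Ideal.mul_mem_right _ _ (Ideal.pow_mem_pow h2 l))
      (by
        intro Q hQ
        obtain ⟨h1, h2⟩ := Finset.mem_filter.1 hQ
        obtain ⟨x, hx, hx'⟩ := hcon Q ((hS Q).1 h1).2.1 ((hS Q).1 h1).2.2
        exact ⟨x, hx, hx'⟩) c
    exact ⟨x, hx, h⟩
  let Y : (𝓞 K ⧸ P ^ k) → Set (𝓞 L) := fun c =>
    {y | Ideal.Quotient.mk (P ^ k) (A.symm y) = c ∧ ∀ Q ∈ S, y ∉ Q ^ l}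
  have hYne : ∀ c, (Y c).Nonempty := by
    intro c
    obtain ⟨c, rfl⟩ := Ideal.Quotient.mk_surjective c
    obtain ⟨x, hx, hx'⟩ := hav c
    have hcop : Nat.Coprime (p ^ (k + l)) M := Nat.Coprime.pow_left _ hpM
    obtain ⟨u, v, huv⟩ := Nat.isCoprime_iff_coprime.mpr hcop
    have huvL : (u : 𝓞 L) * (p : 𝓞 L) ^ (k + l) + v * M = 1 := by
      exact_mod_cast congrArg (Int.cast : ℤ → 𝓞 L) huv
    let w : 𝓞 K := A.symm 1 - (c + x)
    have hAz : A ((u * (p ^ (k + l) : ℕ) : ℤ) • w) = u * (p : 𝓞 L) ^ (k + l) * (1 - A (c + x)) := by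
      rw [map_zsmul, zsmul_eq_mul, map_sub, A.apply_symm_apply]
      push_cast
      ring
    refine ⟨A (c + x) + A ((u * (p ^ (k + l) : ℕ) : ℤ) • w), ?_, ?_⟩
    · rw [← map_add, A.symm_apply_apply, Ideal.Quotient.eq]
      have : c + x + (u * (p ^ (k + l) : ℕ) : ℤ) • w - c = x + (p : 𝓞 K) ^ k * ((p : 𝓞 K) ^ l * u * w) := by
        rw [zsmul_eq_mul]; push_cast; ring
      rw [this]
      exact Ideal.add_mem _ hx (Ideal.mul_mem_right _ _ (Ideal.pow_mem_pow hpP k))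
    · intro Q hQ hmem
      rw [hAz] at hmem
      by_cases hpQ : (p : 𝓞 L) ∈ Q
      · apply hx' Q (Finset.mem_filter.2 ⟨hQ, hpQ⟩)
        refine (Ideal.add_mem_iff_left _ ?_).1 hmem
        have : (u : 𝓞 L) * (p : 𝓞 L) ^ (k + l) * (1 - A (c + x)) =
          (p : 𝓞 L) ^ l * ((p : 𝓞 L) ^ k * u * (1 - A (c + x))) := by ring
        rw [this]
        exact Ideal.mul_mem_right _ _ (Ideal.pow_mem_pow hpQ l)
      · have hMQ := hM Q (Finset.mem_filter.2 ⟨hQ, hpQ⟩)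
        have h1 : (1 : 𝓞 L) = (A (c + x) + u * (p : 𝓞 L) ^ (k + l) * (1 - A (c + x))) +
            M * (v * (1 - A (c + x))) := by
          linear_combination (A (c + x) - 1) * huvL
        have h2 : (1 : 𝓞 L) ∈ Q ^ l := by
          rw [h1]
          exact Ideal.add_mem _ hmem (Ideal.mul_mem_right _ _ hMQ)
        exact ((hS Q).1 hQ).2.1.ne_top ((Ideal.eq_top_iff_one _).2 (Ideal.pow_le_self hl h2))
  have hYinf : ∀ c, (Y c).Infinite := by
    intro c
    obtain ⟨y, hy1, hy2⟩ := hYne c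
    let D : ℕ := p ^ (k + l) * M
    have hD0 : (D : 𝓞 L) ≠ 0 := by
      have : D ≠ 0 := mul_ne_zero (pow_ne_zero _ hp.ne_zero) hM0
      exact_mod_cast this
    refine Set.infinite_of_injective_forall_mem (f := fun n : ℕ => y + A (n • A.symm (D : 𝓞 L))) ?_ ?_
    · intro a b hab
      have hab' : y + A (a • A.symm (D : 𝓞 L)) = y + A (b • A.symm (D : 𝓞 L)) := hab
      rw [add_right_inj, map_nsmul, map_nsmul, A.apply_symm_apply, nsmul_eq_mul, nsmul_eq_mul] at hab'
      exact_mod_cast mul_right_cancel₀ hD0 hab'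
    · intro n
      have hD1 : A.symm (D : 𝓞 L) = D * A.symm 1 := by
        rw [← nsmul_eq_mul, ← map_nsmul, nsmul_eq_mul, mul_one]
      refine ⟨?_, ?_⟩
      · rw [← hy1, map_add, A.symm_apply_apply, Ideal.Quotient.eq, add_sub_cancel_left, nsmul_eq_mul, hD1]
        have : (n : 𝓞 K) * ((D : 𝓞 K) * A.symm 1) = (p : 𝓞 K) ^ k * ((p : 𝓞 K) ^ l * M * n * A.symm 1) := by
          simp only [D]; push_cast; ring
        rw [this]
        exact Ideal.mul_mem_right _ _ (Ideal.pow_mem_pow hpP k)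
      · intro Q hQ hmem
        apply hy2 Q hQ
        refine (Ideal.add_mem_iff_left _ ?_).1 hmem
        rw [map_nsmul, A.apply_symm_apply, nsmul_eq_mul]
        by_cases hpQ : (p : 𝓞 L) ∈ Q
        · have : (n : 𝓞 L) * (D : 𝓞 L) = (p : 𝓞 L) ^ l * ((p : 𝓞 L) ^ k * M * n) := by
            simp only [D]; push_cast; ring
          rw [this]
          exact Ideal.mul_mem_right _ _ (Ideal.pow_mem_pow hpQ l)
        · have : (n : 𝓞 L) * (D : 𝓞 L) = M * ((p : 𝓞 L) ^ (k + l) * n) := by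
            simp only [D]; push_cast; ring
          rw [this]
          exact Ideal.mul_mem_right _ _ (hM Q (Finset.mem_filter.2 ⟨hQ, hpQ⟩))
  obtain ⟨t, htY, hts⟩ := exists_sparse W Finset.univ Y hYinf
  have hT : Set.range t ∈ admissibleSets L l := by
    intro Q hQ hQ0
    by_cases hQm : Ideal.absNorm Q ≤ m
    · refine ⟨0, ?_⟩
      rintro _ ⟨i, rfl⟩
      rw [sub_zero]
      exact (htY i).2 Q ((hS Q).2 ⟨hQm, hQ, hQ0⟩)
    · have h1 : Fintype.card (𝓞 K ⧸ P ^ k) < Ideal.absNorm (Q ^ l) := by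
        rw [← hm, map_pow]
        refine lt_of_lt_of_le (not_le.1 hQm) (Nat.le_self_pow hl _)
      obtain ⟨c, hc⟩ := exists_missed t (Q ^ l) h1
      exact ⟨c, by rintro _ ⟨i, rfl⟩; exact hc i⟩
  have hT2 := hW _ hT (by
    rintro _ ⟨i, rfl⟩ _ ⟨j, rfl⟩ hij
    exact hts i (Finset.mem_univ _) j (Finset.mem_univ _) (fun e => hij (by rw [e])))
  obtain ⟨c, hc⟩ := hT2 P hP h0
  refine hc (A.symm (t (Ideal.Quotient.mk (P ^ k) c))) ⟨_, ⟨_, rfl⟩, rfl⟩ ?_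
  rw [← Ideal.Quotient.eq]
  exact (htY _).1

theorem main_eq {K L : Type*} [Field K] [NumberField K]
    [Field L] [NumberField L] (k l : ℕ) (hk : k ≠ 0) (hl : l ≠ 0)
    (A : 𝓞 K ≃+ 𝓞 L) (f : ↥(admissibleSets K k) ≃ₜ ↥(admissibleSets L l))
    (h : ∀ (t : 𝓞 K) (X Y : ↥(admissibleSets K k)),
        (Y : Set (𝓞 K)) = (t + ·) '' (X : Set (𝓞 K)) →
        ((f Y : Set (𝓞 L))) = (A t + ·) '' ((f X : Set (𝓞 L))))
    (P : Ideal (𝓞 K)) (hP : P.IsPrime) (h0 : P ≠ ⊥) (p : ℕ) (hp : p.Prime) (hpP : (p : 𝓞 K) ∈ P)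
    (hpn : Module.finrank ℚ K + Module.finrank ℚ L < p) :
    ∃ Q : Ideal (𝓞 L), Q.IsPrime ∧ Q ≠ ⊥ ∧ (p : 𝓞 L) ∈ Q ∧ ∀ x, x ∈ P ^ k ↔ A x ∈ Q ^ l := by
  obtain ⟨W1, hW1⟩ := transfer k l hk A f h
  obtain ⟨W2, hW2⟩ := transfer l k hl A.symm f.symm (conj_symm k l A f h)
  obtain ⟨Q, hQ, hQ0, hPQ⟩ := main_subset k l hl A W2 hW2 P hP h0 p hp hpP (by omega)
  have hpQ : (p : 𝓞 L) ∈ Q := by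
    have h1 : (p : 𝓞 K) ^ k * A.symm 1 ∈ P ^ k := Ideal.mul_mem_right _ _ (Ideal.pow_mem_pow hpP k)
    have h2 := hPQ _ h1
    rw [← Nat.cast_pow, ← nsmul_eq_mul, map_nsmul, A.apply_symm_apply, nsmul_eq_mul, mul_one, Nat.cast_pow] at h2
    exact hQ.mem_of_pow_mem _ (Ideal.pow_le_self hl h2)
  obtain ⟨P', hP', hP0', hQP⟩ := main_subset l k hk A.symm W1 hW1 Q hQ hQ0 p hp hpQ (by omega)
  have hle : P ≤ P' := by
    intro x hx
    have h1 := hQP _ (hPQ _ (Ideal.pow_mem_pow hx k))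
    rw [A.symm_apply_apply] at h1
    exact hP'.mem_of_pow_mem _ (Ideal.pow_le_self hk h1)
  have heq : P = P' := (hP.isMaximal h0).eq_of_le hP'.ne_top hle
  subst heq
  refine ⟨Q, hQ, hQ0, hpQ, fun x => ⟨hPQ x, fun hx => ?_⟩⟩
  have := hQP _ hx
  rwa [A.symm_apply_apply] at this

theorem k_le_l {K L : Type*} [Field K] [NumberField K]
    [Field L] [NumberField L] (k l : ℕ) (hk : k ≠ 0) (hl : l ≠ 0)
    (A : 𝓞 K ≃+ 𝓞 L) (f : ↥(admissibleSets K k) ≃ₜ ↥(admissibleSets L l))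
    (h : ∀ (t : 𝓞 K) (X Y : ↥(admissibleSets K k)),
        (Y : Set (𝓞 K)) = (t + ·) '' (X : Set (𝓞 K)) →
        ((f Y : Set (𝓞 L))) = (A t + ·) '' ((f X : Set (𝓞 L)))) : k ≤ l := by
  obtain ⟨p, P, hp, hpn, hP, h0, hpP, hp2, -⟩ :=
    exists_deg_one K (Module.finrank ℚ K + Module.finrank ℚ L)
  obtain ⟨Q, hQ, hQ0, hpQ, hiff⟩ := main_eq k l hk hl A f h P hP h0 p hp hpP hpn
  by_contra hlt
  apply p_pow_not_mem hP h0 hpP hp2 l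
  have h1 : (p : 𝓞 K) ^ l ∈ P ^ k := by
    rw [hiff, ← mul_one ((p : 𝓞 K) ^ l), ← Nat.cast_pow, ← nsmul_eq_mul, map_nsmul, nsmul_eq_mul, Nat.cast_pow]
    exact Ideal.mul_mem_right _ _ (Ideal.pow_mem_pow hpQ l)
  exact Ideal.pow_le_pow_right (by omega) h1

theorem A_mul {K L : Type*} [Field K] [NumberField K]
    [Field L] [NumberField L] (k l : ℕ) (hk : k ≠ 0) (hl : l ≠ 0)
    (A : 𝓞 K ≃+ 𝓞 L) (f : ↥(admissibleSets K k) ≃ₜ ↥(admissibleSets L l))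
    (h : ∀ (t : 𝓞 K) (X Y : ↥(admissibleSets K k)),
        (Y : Set (𝓞 K)) = (t + ·) '' (X : Set (𝓞 K)) →
        ((f Y : Set (𝓞 L))) = (A t + ·) '' ((f X : Set (𝓞 L)))) (x y : 𝓞 K) :
    A x * A y = A 1 * A (x * y) := by
  by_contra hne
  obtain ⟨z, hz⟩ : ∃ z, z = A x * A y - A 1 * A (x * y) := ⟨_, rfl⟩
  have hz0 : z ≠ 0 := by rw [hz]; exact sub_ne_zero.2 hne
  obtain ⟨p, P, hp, hpn, hP, h0, hpP, hp2, hs⟩ :=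
    exists_deg_one K (Module.finrank ℚ K + Module.finrank ℚ L + Ideal.absNorm (Ideal.span {z}))
  obtain ⟨Q, hQ, hQ0, hpQ, hiff⟩ := main_eq k l hk hl A f h P hP h0 p hp hpP (by omega)
  have hA : ∀ (x : 𝓞 K) (m : ℤ), x - m ∈ P ^ k → A x - m * A 1 ∈ Q ^ l := by
    intro x m hm
    rw [hiff, map_sub] at hm
    convert hm using 2
    rw [← zsmul_eq_mul, ← map_zsmul, zsmul_eq_mul, mul_one]
  obtain ⟨m, hm⟩ := surj_pow hP h0 hpP hp2 hs k x
  obtain ⟨n, hn⟩ := surj_pow hP h0 hpP hp2 hs k y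
  have hmn : x * y - ((m * n : ℤ) : 𝓞 K) ∈ P ^ k := by
    have : x * y - ((m * n : ℤ) : 𝓞 K) = (x - m) * y + m * (y - n) := by push_cast; ring
    rw [this]
    exact Ideal.add_mem _ (Ideal.mul_mem_right _ _ hm) (Ideal.mul_mem_left _ _ hn)
  have h1 := hA _ _ hm
  have h2 := hA _ _ hn
  have h3 := hA _ _ hmn
  have hzQ : z ∈ Q ^ l := by
    have : z = (A x - m * A 1) * A y + m * A 1 * (A y - n * A 1)
        - A 1 * (A (x * y) - ((m * n : ℤ) : 𝓞 L) * A 1) := by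
      rw [hz]; push_cast; ring
    rw [this]
    exact Ideal.sub_mem _ (Ideal.add_mem _ (Ideal.mul_mem_right _ _ h1) (Ideal.mul_mem_left _ _ h2))
      (Ideal.mul_mem_left _ _ h3)
  have hzQ' : Ideal.span {z} ≤ Q := by
    rw [Ideal.span_le]; simpa using Ideal.pow_le_self hl hzQ
  have hNQ := hzQ' (Ideal.absNorm_mem (Ideal.span {z}))
  have hN0 : Ideal.absNorm (Ideal.span {z}) ≠ 0 := by
    rw [Ne, Ideal.absNorm_eq_zero_iff]; simpa using hz0
  refine not_mem_of_coprime hQ.ne_top ?_ hpQ hNQ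
  rw [Nat.Prime.coprime_iff_not_dvd hp]
  intro hd
  have := Nat.le_of_dvd (Nat.pos_of_ne_zero hN0) hd
  omega

theorem iso_of_mul {K L : Type*} [Field K] [NumberField K] [Field L] [NumberField L]
    (A : 𝓞 K ≃+ 𝓞 L) (hA : ∀ x y, A x * A y = A 1 * A (x * y)) : Nonempty (K ≃+* L) := by
  have h1 : ((A 1 : 𝓞 L) : L) ≠ 0 := by
    have : A 1 ≠ 0 := by simp
    simpa using this
  let g : 𝓞 K →+* L :=
    { toFun := fun x => ((A x : 𝓞 L) : L) / ((A 1 : 𝓞 L) : L)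
      map_one' := div_self h1
      map_zero' := by simp
      map_add' := fun x y => by simp [add_div]
      map_mul' := fun x y => by
        have := congrArg (algebraMap (𝓞 L) L) (hA x y)
        simp only [map_mul] at this
        field_simp
        linear_combination -this }
  have hg : Function.Injective g := by
    intro x y hxy
    have h2 : ((A x : 𝓞 L) : L) / ((A 1 : 𝓞 L) : L) = ((A y : 𝓞 L) : L) / ((A 1 : 𝓞 L) : L) := hxy
    rw [div_left_inj' h1] at h2
    exact A.injective (RingOfIntegers.ext h2)
  let φ : K →+* L := IsFractionRing.lift hg
  have hrank : Module.finrank ℚ K = Module.finrank ℚ L := by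
    rw [← RingOfIntegers.rank K, ← RingOfIntegers.rank L]
    exact LinearEquiv.finrank_eq A.toIntLinearEquiv
  let ψ : K →ₐ[ℚ] L := φ.toRatAlgHom
  have hinj : Function.Injective ψ.toLinearMap := φ.injective
  have hsur := (LinearMap.injective_iff_surjective_of_finrank_eq_finrank hrank).1 hinj
  exact ⟨RingEquiv.ofBijective φ ⟨φ.injective, hsur⟩⟩

theorem adm_map {K L : Type*} [Field K] [NumberField K] [Field L] [NumberField L]
    (k : ℕ) (e : 𝓞 K ≃+* 𝓞 L) {X : Set (𝓞 K)} (hX : X ∈ admissibleSets K k) :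
    e '' X ∈ admissibleSets L k := by
  intro Q hQ hQ0
  have h0 : Q.comap e ≠ ⊥ := by
    intro h
    apply hQ0
    rw [eq_bot_iff]
    intro y hy
    have : e.symm y ∈ Q.comap e := by rw [Ideal.mem_comap, e.apply_symm_apply]; exact hy
    rw [h, Ideal.mem_bot] at this
    simpa using this
  obtain ⟨c, hc⟩ := hX (Q.comap e) (hQ.comap e) h0
  refine ⟨e c, ?_⟩
  rintro _ ⟨y, hy, rfl⟩ hmem
  apply hc y hy
  have hmap : (Q.comap e) = Q.map e.symm := (Ideal.map_symm e).symm
  rw [hmap, ← Ideal.map_pow, Ideal.map_symm, Ideal.mem_comap, map_sub]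
  exact hmem

theorem continuous_image {G H : Type*} (e : G ≃ H) : Continuous (fun S : Set G => e '' S) := by
  rw [continuous_induced_rng, continuous_pi_iff]
  intro h
  have : (fun S : Set G => @decide (h ∈ e '' S) (Classical.propDecidable _)) =
      (fun S : Set G => @decide (e.symm h ∈ S) (Classical.propDecidable _)) := by
    funext S
    have hh : h ∈ e '' S ↔ e.symm h ∈ S := by
      constructor
      · rintro ⟨s, hs, rfl⟩
        simpa using hs
      · intro hs
        exact ⟨e.symm h, hs, by simp⟩
    exact decide_eq_decide.2 hh
  change Continuous (fun S : Set G => @decide (h ∈ e '' S) (Classical.propDecidable _))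
  rw [this]
  have h1 : Continuous (fun φ : G → Bool => φ (e.symm h)) := continuous_apply _
  have h2 : Continuous (fun (S : Set G) (g : G) => @decide (g ∈ S) (Classical.propDecidable _)) :=
    continuous_induced_dom
  exact h1.comp h2

theorem conj_of_iso {K L : Type*} [Field K] [NumberField K] [Field L] [NumberField L]
    (k : ℕ) (φ : K ≃+* L) :
    ∃ (A : 𝓞 K ≃+ 𝓞 L) (f : ↥(admissibleSets K k) ≃ₜ ↥(admissibleSets L k)),
      ∀ (t : 𝓞 K) (X Y : ↥(admissibleSets K k)),
        (Y : Set (𝓞 K)) = (t + ·) '' (X : Set (𝓞 K)) →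
        ((f Y : Set (𝓞 L))) = (A t + ·) '' ((f X : Set (𝓞 L))) := by
  let e : 𝓞 K ≃+* 𝓞 L := RingOfIntegers.mapRingEquiv φ
  let f : ↥(admissibleSets K k) ≃ₜ ↥(admissibleSets L k) :=
    { toFun := fun X => ⟨e '' X, adm_map k e X.2⟩
      invFun := fun X => ⟨e.symm '' X, adm_map k e.symm X.2⟩
      left_inv := fun X => by
        apply Subtype.ext
        simp [Set.image_image]
      right_inv := fun X => by
        apply Subtype.ext
        simp [Set.image_image]
      continuous_toFun :=
        ((continuous_image e.toEquiv).comp continuous_subtype_val).subtype_mk _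
      continuous_invFun :=
        ((continuous_image e.symm.toEquiv).comp continuous_subtype_val).subtype_mk _ }
  refine ⟨e.toAddEquiv, f, ?_⟩
  intro t X Y hXY
  change e '' (Y : Set (𝓞 K)) = (e t + ·) '' (e '' (X : Set (𝓞 K)))
  rw [hXY, Set.image_image, Set.image_image]
  simp

/-- For `k, l ≥ 2`, the shift spaces `𝔻_{K,k}` and `𝔻_{L,l}` are topologically
conjugate if and only if `K ≅ L` as fields and `k = l`. -/
theorem conjugacy_iff {K L : Type*} [Field K] [NumberField K]
    [Field L] [NumberField L] (k l : ℕ) (hk : 2 ≤ k) (hl : 2 ≤ l) :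
    (∃ (A : 𝓞 K ≃+ 𝓞 L) (f : ↥(admissibleSets K k) ≃ₜ ↥(admissibleSets L l)),
      ∀ (t : 𝓞 K) (X Y : ↥(admissibleSets K k)),
        (Y : Set (𝓞 K)) = (t + ·) '' (X : Set (𝓞 K)) →
        ((f Y : Set (𝓞 L))) = (A t + ·) '' ((f X : Set (𝓞 L)))) ↔
      (Nonempty (K ≃+* L) ∧ k = l) := by
  constructor
  · rintro ⟨A, f, h⟩
    have hk0 : k ≠ 0 := by omega
    have hl0 : l ≠ 0 := by omega
    refine ⟨iso_of_mul A (A_mul k l hk0 hl0 A f h), le_antisymm (k_le_l k l hk0 hl0 A f h) ?_⟩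
    exact k_le_l l k hl0 hk0 A.symm f.symm (conj_symm k l A f h)
  · rintro ⟨⟨φ⟩, rfl⟩
    exact conj_of_iso k φ
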